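/- Let R be a commutative Noetherian ring, 𝔞 an ideal of R, n ∈ {0, 1}, and M an R-module belonging to FD_{≤n}. Then M is 𝔞-cofinite if and only if Supp_R M ⊆ V(𝔞) and the R-module Ext^i_R(R/𝔞, M) is finitely generated for every integer 0 ≤ i ≤ n. -/

import Mathlib

open CategoryTheory

universe u

/-- The `R`-module `Ext^i_R(N, M)` for two `R`-modules (objects of `ModuleCat R`). -/
noncomputable def extObj {R : Type u} [CommRing R] (N M : ModuleCat.{u} R) (i : ℕ) :
    ModuleCat.{u} R :=
  ((Ext R (ModuleCat.{u} R) i).obj (Opposite.op N)).obj M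

/-- The `R`-module `Ext^i_R(R/𝔞, M)`. -/
noncomputable def extIdeal {R : Type u} [CommRing R] (𝔞 : Ideal R) (i : ℕ)
    (M : ModuleCat.{u} R) : ModuleCat.{u} R :=
  extObj (ModuleCat.of R (R ⧸ 𝔞)) M i

/-- An `R`-module `M` is `𝔞`-cofinite if `Supp_R M ⊆ V(𝔞)` and `Ext^i_R(R/𝔞, M)` is a finitely
generated `R`-module for every `i ≥ 0`. -/
def IsCofinite {R : Type u} [CommRing R] (𝔞 : Ideal R) (M : ModuleCat.{u} R) : Prop :=
  Module.support R M ⊆ PrimeSpectrum.zeroLocus (𝔞 : Set R) ∧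
    ∀ i : ℕ, Module.Finite R (extIdeal 𝔞 i M)

/-- The Krull dimension `dim_R M` of an `R`-module `M`: the Krull dimension of its support,
i.e. the supremum of `dim R/𝔭` over primes `𝔭` in the support of `M`. -/
noncomputable def moduleDim (R : Type u) [CommRing R] (M : Type u) [AddCommGroup M]
    [Module R M] : WithBot ℕ∞ :=
  Order.krullDim (Module.support R M)

/-- An `R`-module `M` is in `FD_{≤n}` if there is a finitely generated submodule `N ⊆ M`
with `dim_R (M/N) ≤ n`. -/
def MemFD (R : Type u) [CommRing R] (n : ℕ) (M : Type u) [AddCommGroup M] [Module R M] : Prop :=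
  ∃ N : Submodule R M, N.FG ∧ moduleDim R (M ⧸ N) ≤ (n : WithBot ℕ∞)

/-- An `R`-module `M` is `𝔞`-torsion if every element is annihilated by some power of `𝔞`. -/
def IsTorsionIdeal {R : Type u} [CommRing R] (𝔞 : Ideal R) (M : Type u) [AddCommGroup M]
    [Module R M] : Prop :=
  ∀ m : M, ∃ n : ℕ, ∀ a ∈ 𝔞 ^ n, a • m = 0

/-- The arithmetic rank of an ideal `𝔞`: the least `n` such that there exist `a₁, …, aₙ ∈ R`
with `Rad (a₁, …, aₙ) = Rad 𝔞`. -/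
noncomputable def arithRank {R : Type u} [CommRing R] (𝔞 : Ideal R) : ℕ :=
  sInf {n : ℕ | ∃ f : Fin n → R, (Ideal.span (Set.range f)).radical = 𝔞.radical}


open CategoryTheory.Abelian

section ExtComparison

variable {R : Type u} [CommRing R] {N M : ModuleCat.{u} R}

lemma ProjectiveResolution.smul_extMk (P : ProjectiveResolution N) {n : ℕ}
    (f : P.complex.X n ⟶ M) (m : ℕ) (hm : n + 1 = m) (hf : P.complex.d m n ≫ f = 0) (r : R) :
    r • P.extMk f m hm hf = P.extMk (r • f) m hm (by simp [hf]) := by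
  rw [Ext.smul_eq_comp_mk₀, P.extMk_comp_mk₀]
  simp

/-- The linear map sending a cocycle of `Hom(P, M)` to its class in `Ext`. -/
noncomputable def ProjectiveResolution.cocycleToExt (P : ProjectiveResolution N) (n : ℕ) :
    LinearMap.ker (Linear.leftComp R M (P.complex.d (n + 1) n)) →ₗ[R] Abelian.Ext N M n where
  toFun f := P.extMk f.1 (n + 1) rfl f.2
  map_add' _ _ := (P.add_extMk _ _ _ _ _ _).symm
  map_smul' r _ := (ProjectiveResolution.smul_extMk P _ _ _ _ r).symm

lemma ProjectiveResolution.cocycleToExt_surjective (P : ProjectiveResolution N) (n : ℕ) :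
    Function.Surjective (cocycleToExt (R := R) (M := M) P n) := fun α ↦ by
  obtain ⟨f, hf, h⟩ := P.extMk_surjective α (n + 1) rfl
  exact ⟨⟨f, hf⟩, h⟩

/-- `Ext` is the homology of `Hom(P, M)`, written as cocycles modulo coboundaries. -/
noncomputable def ProjectiveResolution.extObjIso (P : ProjectiveResolution N) (n i : ℕ)
    (hi : (ComplexShape.up ℕ).prev n = i) :
    extObj N M n ≅ ((P.complex.linearYonedaObj R M).sc' i n (n + 1)).moduleCatLeftHomologyData.H :=
  P.isoExt n M ≪≫ ShortComplex.homologyMapIso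
    ((P.complex.linearYonedaObj R M).isoSc' i n (n + 1) hi (by simp)) ≪≫
    ShortComplex.moduleCatHomologyIso _

lemma finite_abelianExt_of_finite_extObj (n : ℕ) (h : Module.Finite R (extObj N M n)) :
    Module.Finite R (Abelian.Ext N M n) := by
  obtain ⟨P⟩ := HasProjectiveResolution.out (Z := N)
  have key : ∀ (i : ℕ) (hi : (ComplexShape.up ℕ).prev n = i),
      (∀ g : P.complex.X i ⟶ M, ∀ h : P.complex.d (n + 1) n ≫ (P.complex.d n i ≫ g) = 0,
        P.extMk (P.complex.d n i ≫ g) (n + 1) rfl h = 0) →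
      Module.Finite R (Abelian.Ext N M n) := by
    intro i hi H
    let S := (P.complex.linearYonedaObj R M).sc' i n (n + 1)
    have h1 : Module.Finite R (LinearMap.ker S.g.hom ⧸ LinearMap.range S.moduleCatToCycles) :=
      Module.Finite.equiv (ProjectiveResolution.extObjIso P n i hi).toLinearEquiv
    let φ : LinearMap.ker S.g.hom →ₗ[R] Abelian.Ext N M n :=
      ProjectiveResolution.cocycleToExt P n
    have hφ : LinearMap.range S.moduleCatToCycles ≤ LinearMap.ker φ := by
      rintro _ ⟨g, rfl⟩
      exact H g (S.moduleCatToCycles g).2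
    exact Module.Finite.of_surjective ((LinearMap.range S.moduleCatToCycles).liftQ φ hφ)
      (fun α ↦ by
        obtain ⟨f, hf⟩ := ProjectiveResolution.cocycleToExt_surjective P n α
        exact ⟨Submodule.Quotient.mk f, hf⟩)
  cases n with
  | zero =>
    refine key 0 (by simp) fun g h ↦ ?_
    simp
  | succ p =>
    refine key p (by simp) fun g h ↦ ?_
    exact (P.extMk_eq_zero_iff _ _ _ _ p rfl).2 ⟨g, rfl⟩

lemma finite_extObj_succ_of_finite_abelianExt (n : ℕ)
    (h : Module.Finite R (Abelian.Ext N M (n + 1))) : Module.Finite R (extObj N M (n + 1)) := by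
  obtain ⟨P⟩ := HasProjectiveResolution.out (Z := N)
  let S := (P.complex.linearYonedaObj R M).sc' n (n + 1) (n + 1 + 1)
  let φ : LinearMap.ker S.g.hom →ₗ[R] Abelian.Ext N M (n + 1) :=
    ProjectiveResolution.cocycleToExt P (n + 1)
  have hφ : LinearMap.ker φ = LinearMap.range S.moduleCatToCycles := by
    ext f
    refine ⟨fun hf ↦ ?_, ?_⟩
    · obtain ⟨g, hg⟩ := (P.extMk_eq_zero_iff _ _ rfl f.2 n rfl).1 hf
      exact ⟨g, Subtype.ext hg⟩
    · rintro ⟨g, rfl⟩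
      exact (P.extMk_eq_zero_iff _ _ rfl (S.moduleCatToCycles g).2 n rfl).2 ⟨g, rfl⟩
  have e := (Submodule.quotEquivOfEq _ _ hφ).symm.trans
    (φ.quotKerEquivOfSurjective (ProjectiveResolution.cocycleToExt_surjective P (n + 1)))
  have : Module.Finite R S.moduleCatLeftHomologyData.H := Module.Finite.equiv e.symm
  exact Module.Finite.equiv
    (ProjectiveResolution.extObjIso P (n + 1) n (by simp)).toLinearEquiv.symm

end ExtComparison

section NoetherianExt

variable {R : Type u} [CommRing R]

/-- The `R`-module `Ext^i_R(N, M)` is Noetherian. -/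
def NoetherianExt (N : ModuleCat.{u} R) (i : ℕ) (M : Type u) [AddCommGroup M] [Module R M] :
    Prop :=
  IsNoetherian R (Abelian.Ext N (ModuleCat.of R M) i)

variable {N : ModuleCat.{u} R} {A B C : Type u} [AddCommGroup A] [AddCommGroup B]
  [AddCommGroup C] [Module R A] [Module R B] [Module R C]

lemma NoetherianExt.of_finite [IsNoetherianRing R] [Module.Finite R N] [Module.Finite R A]
    (i : ℕ) : NoetherianExt N i A := by
  have : Module.Finite R (ModuleCat.of R A) := ‹Module.Finite R A›
  have : Module.Finite R (Abelian.Ext N (ModuleCat.of R A) i) := inferInstance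
  exact inferInstanceAs (IsNoetherian R (Abelian.Ext N (ModuleCat.of R A) i))

variable {f : A →ₗ[R] B} {g : B →ₗ[R] C}

lemma shortExact_of_exact (hf : Function.Injective f) (hg : Function.Surjective g)
    (h : Function.Exact f g) :
    (ModuleCat.shortComplexOfCompEqZero f g h.linearMap_comp_eq_zero).ShortExact :=
  ModuleCat.shortComplex_shortExact _ h hf hg

lemma isNoetherian_of_ker_eq_range {A' B' C' : Type*} [AddCommGroup A'] [AddCommGroup B']
    [AddCommGroup C'] [Module R A'] [Module R B'] [Module R C']
    (f : A' →ₗ[R] B') (g : B' →ₗ[R] C') (hA : IsNoetherian R A') (hC : IsNoetherian R C')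
    (h : ∀ b, g b = 0 → ∃ a, f a = b) : IsNoetherian R B' := by
  have : IsNoetherian R (LinearMap.ker g) := by
    rw [isNoetherian_submodule]
    intro s hs
    have hs' : s = (s.comap f).map f := by
      rw [Submodule.map_comap_eq, eq_comm, inf_eq_right]
      exact fun b hb ↦ h b (hs hb)
    rw [hs']
    exact (IsNoetherian.noetherian _).map f
  exact isNoetherian_of_range_eq_ker (LinearMap.ker g).subtype g (by simp)

lemma NoetherianExt.of_exact₂ (hf : Function.Injective f) (hg : Function.Surjective g)
    (h : Function.Exact f g) {i : ℕ} (hA : NoetherianExt N i A) (hC : NoetherianExt N i C) :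
    NoetherianExt N i B :=
  isNoetherian_of_ker_eq_range
    ((Abelian.Ext.mk₀ (ModuleCat.ofHom f)).postcompOfLinear R N (add_zero i))
    ((Abelian.Ext.mk₀ (ModuleCat.ofHom g)).postcompOfLinear R N (add_zero i)) hA hC
    (fun x hx ↦ Ext.covariant_sequence_exact₂ N (shortExact_of_exact hf hg h) x hx)

lemma NoetherianExt.of_exact₃ (hf : Function.Injective f) (hg : Function.Surjective g)
    (h : Function.Exact f g) {i : ℕ} (hB : NoetherianExt N i B)
    (hA : NoetherianExt N (i + 1) A) : NoetherianExt N i C :=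
  isNoetherian_of_ker_eq_range
    ((Abelian.Ext.mk₀ (ModuleCat.ofHom g)).postcompOfLinear R N (add_zero i))
    ((shortExact_of_exact hf hg h).extClass.postcompOfLinear R N rfl) hB hA
    (fun x hx ↦ Ext.covariant_sequence_exact₃ N (shortExact_of_exact hf hg h) x rfl hx)

lemma NoetherianExt.of_exact₁ (hf : Function.Injective f) (hg : Function.Surjective g)
    (h : Function.Exact f g) {i : ℕ} (hC : NoetherianExt N i C)
    (hB : NoetherianExt N (i + 1) B) : NoetherianExt N (i + 1) A :=
  isNoetherian_of_ker_eq_range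
    ((shortExact_of_exact hf hg h).extClass.postcompOfLinear R N rfl)
    ((Abelian.Ext.mk₀ (ModuleCat.ofHom f)).postcompOfLinear R N (add_zero (i + 1))) hC hB
    (fun x hx ↦ Ext.covariant_sequence_exact₁ N (shortExact_of_exact hf hg h) x hx rfl)

lemma NoetherianExt.of_injective (hf : Function.Injective f) (hB : NoetherianExt N 0 B) :
    NoetherianExt N 0 A :=
  have : Mono (ModuleCat.ofHom f) := (ModuleCat.mono_iff_injective _).2 hf
  have : IsNoetherian R (Abelian.Ext N (ModuleCat.of R B) 0) := hB
  isNoetherian_of_injective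
    ((Abelian.Ext.mk₀ (ModuleCat.ofHom f)).postcompOfLinear R N (add_zero 0))
    (Ext.postcomp_mk₀_injective_of_mono N (ModuleCat.ofHom f))

/-- Ext modules of all three terms of a short exact sequence are Noetherian if those of the
first two are. -/
lemma NoetherianExt.forall_of_exact₃ (hf : Function.Injective f) (hg : Function.Surjective g)
    (h : Function.Exact f g) (hA : ∀ i, NoetherianExt N i A) (hB : ∀ i, NoetherianExt N i B)
    (i : ℕ) : NoetherianExt N i C :=
  .of_exact₃ hf hg h (hB i) (hA (i + 1))

lemma NoetherianExt.forall_of_exact₁ (hf : Function.Injective f) (hg : Function.Surjective g)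
    (h : Function.Exact f g) (hB : ∀ i, NoetherianExt N i B) (hC : ∀ i, NoetherianExt N i C) :
    ∀ i, NoetherianExt N i A
  | 0 => .of_injective hf (hB 0)
  | i + 1 => .of_exact₁ hf hg h (hC i) (hB (i + 1))

lemma isNoetherian_of_comp_eq_zero {A B C D : Type*} [AddCommGroup A] [AddCommGroup B]
    [AddCommGroup C] [AddCommGroup D] [Module R A] [Module R B] [Module R C] [Module R D]
    {f : A →ₗ[R] B} {g : B →ₗ[R] A} (hfg : g ∘ₗ f = 0) (δ : B →ₗ[R] C) (ε : A →ₗ[R] D)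
    (hC : IsNoetherian R C) (hD : IsNoetherian R D) (hδ : ∀ b, δ b = 0 → ∃ a, f a = b)
    (hε : ∀ a, ε a = 0 → ∃ b, g b = a) : IsNoetherian R A := by
  have hle : LinearMap.ker δ ≤ LinearMap.ker g := fun b hb ↦ by
    obtain ⟨a, rfl⟩ := hδ b hb
    exact LinearMap.congr_fun hfg a
  have : IsNoetherian R (B ⧸ LinearMap.ker δ) :=
    isNoetherian_of_linearEquiv δ.quotKerEquivRange.symm
  exact isNoetherian_of_ker_eq_range ((LinearMap.ker δ).liftQ g hle) ε this hD fun a ha ↦ by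
    obtain ⟨b, hb⟩ := hε a ha
    exact ⟨Submodule.Quotient.mk b, hb⟩

/-- If `x` annihilates `N` and the Ext modules of the kernel and of the cokernel of
multiplication by `x` on `M` are Noetherian, then so are those of `M`. -/
lemma NoetherianExt.of_lsmul {M : Type u} [AddCommGroup M] [Module R M] {x : R}
    (hx : x ∈ Module.annihilator R N)
    (hK : ∀ i, NoetherianExt N i (LinearMap.ker (LinearMap.lsmul R M x)))
    (hQ : ∀ i, NoetherianExt N i (M ⧸ LinearMap.range (LinearMap.lsmul R M x)))
    (i : ℕ) : NoetherianExt N i M := by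
  let φ := LinearMap.lsmul R M x
  have h₁ := shortExact_of_exact (f := (LinearMap.ker φ).subtype) (g := φ.rangeRestrict)
    (Submodule.subtype_injective _) φ.surjective_rangeRestrict
    (by rw [LinearMap.exact_iff, LinearMap.ker_rangeRestrict, Submodule.range_subtype])
  have h₂ := shortExact_of_exact (f := (LinearMap.range φ).subtype)
    (g := (LinearMap.range φ).mkQ) (Submodule.subtype_injective _) (Submodule.mkQ_surjective _)
    (by rw [LinearMap.exact_iff, Submodule.ker_mkQ, Submodule.range_subtype])
  refine isNoetherian_of_comp_eq_zero
    (f := (Abelian.Ext.mk₀ (ModuleCat.ofHom φ.rangeRestrict)).postcompOfLinear R N (add_zero i))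
    (g := (Abelian.Ext.mk₀ (ModuleCat.ofHom (LinearMap.range φ).subtype)).postcompOfLinear
      R N (add_zero i)) ?_
    (h₁.extClass.postcompOfLinear R N rfl)
    ((Abelian.Ext.mk₀ (ModuleCat.ofHom (LinearMap.range φ).mkQ)).postcompOfLinear
      R N (add_zero i)) (hK (i + 1)) (hQ i)
    (fun a ha ↦ Ext.covariant_sequence_exact₃ N h₁ a rfl ha)
    (fun a ha ↦ Ext.covariant_sequence_exact₂ N h₂ a ha)
  ext α
  have hφ : ModuleCat.ofHom φ.rangeRestrict ≫ ModuleCat.ofHom (LinearMap.range φ).subtype =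
      x • 𝟙 (ModuleCat.of R M) := by
    ext m
    rfl
  have := ConcreteCategory.congr_hom
    (Ext.postcomp_smul_id_eq_zero_of_mem_annihilator (M := ModuleCat.of R M) hx i) α
  simpa [← hφ] using this

end NoetherianExt

section Torsion

variable {R : Type*} [CommRing R]

open LinearMap

lemma smul_eq_zero_of_le {M : Type*} [AddCommGroup M] [Module R M] {x : R} {k l : ℕ} {m : M}
    (h : k ≤ l) (hm : x ^ k • m = 0) : x ^ l • m = 0 := by
  rw [← Nat.sub_add_cancel h, pow_add, mul_smul, hm, smul_zero]

lemma isArtinian_of_ker_lsmul {M : Type*} [AddCommGroup M] [Module R M] (x : R)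
    (hx : ∀ m : M, ∃ k : ℕ, x ^ k • m = 0)
    (h : IsArtinian R (ker (lsmul R M x))) : IsArtinian R M := by
  rw [← monotone_stabilizes_iff_artinian]
  intro N'
  let N : ℕ → Submodule R M := fun j ↦ OrderDual.ofDual (N' j)
  have hN : ∀ {i j}, i ≤ j → N j ≤ N i := fun h ↦ N'.monotone h
  -- the submodules `x ^ k N ∩ (0 :_M x)`, decreasing in both `k` and the chain index
  let F : ℕ → ℕ → Submodule R (ker (lsmul R M x)) := fun j k ↦
    ((N j).map (lsmul R M (x ^ k))).comap (ker (lsmul R M x)).subtype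
  have hF₁ : ∀ {i j} k, i ≤ j → F j k ≤ F i k := fun k hij ↦
    Submodule.comap_mono (Submodule.map_mono (hN hij))
  have hF₂ : ∀ j {k l}, k ≤ l → F j l ≤ F j k := by
    intro j k l hkl
    refine Submodule.comap_mono ?_
    rintro _ ⟨m, hm, rfl⟩
    refine ⟨x ^ (l - k) • m, Submodule.smul_mem _ _ hm, ?_⟩
    simp [smul_smul, ← pow_add, hkl]
  obtain ⟨_, ⟨⟨j₀, k₀⟩, rfl⟩, hmin⟩ := IsArtinian.set_has_minimal
    (Set.range fun p : ℕ × ℕ ↦ F p.1 p.2) ⟨_, ⟨(0, 0), rfl⟩⟩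
  have hbig : ∀ j k, j₀ ≤ j → k₀ ≤ k → F j k = F j₀ k₀ := fun j k hj hk ↦
    eq_of_le_of_not_lt ((hF₁ k hj).trans (hF₂ j₀ hk)) (hmin _ ⟨(j, k), rfl⟩)
  have hsmall : ∀ k, ∃ n, ∀ j, n ≤ j → F n k = F j k := fun k ↦
    IsArtinian.monotone_stabilizes ⟨fun j ↦ OrderDual.toDual (F j k), fun _ _ h ↦ hF₁ k h⟩
  choose n hn using hsmall
  let J := max j₀ ((Finset.range k₀).sup n)
  have hJ : ∀ k j, J ≤ j → F J k = F j k := by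
    intro k j hj
    by_cases hk : k₀ ≤ k
    · rw [hbig J k (le_max_left _ _) hk, hbig j k ((le_max_left _ _).trans hj) hk]
    · have : n k ≤ J := (Finset.le_sup (f := n) (Finset.mem_range.2 (not_le.1 hk))).trans
        (le_max_right _ _)
      rw [← hn k J this, ← hn k j (this.trans hj)]
  suffices ∀ j, J ≤ j → ∀ k, ∀ m ∈ N J, x ^ k • m = 0 → m ∈ N j from
    ⟨J, fun j hj ↦ le_antisymm (α := Submodule R M)
      (fun m hm ↦ (hx m).elim fun k hk ↦ this j hj k m hm hk) (hN hj)⟩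
  intro j hj k
  induction k with
  | zero => intro m _ h0; simp_all
  | succ k ih =>
    intro m hm hk
    have hmem : (⟨x ^ k • m, by
        rwa [mem_ker, lsmul_apply, smul_smul, ← pow_succ']⟩ :
        ker (lsmul R M x)) ∈ F J k := ⟨m, hm, rfl⟩
    rw [hJ k j hj] at hmem
    obtain ⟨z, hz, hz'⟩ := hmem
    have := ih (m - z) (sub_mem hm (hN hj hz)) (by
      rw [smul_sub, sub_eq_zero]
      exact hz'.symm)
    simpa using add_mem this hz

lemma exists_injective_torsionBySet_ker_lsmul {M : Type*} [AddCommGroup M] [Module R M]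
    (x : R) (l : List R) :
    ∃ f : Submodule.torsionBySet R (ker (lsmul R M x)) {y | y ∈ l} →ₗ[R]
      Submodule.torsionBySet R M {y | y ∈ x :: l}, Function.Injective f := by
  refine ⟨((ker (lsmul R M x)).subtype ∘ₗ Submodule.subtype _).codRestrict _ fun m ↦ ?_,
    fun a b hab ↦ Subtype.ext (Subtype.ext (congrArg Subtype.val hab :))⟩
  rw [Submodule.mem_torsionBySet_iff]
  rintro ⟨y, hy⟩
  rcases List.mem_cons.1 hy with rfl | hy
  · exact m.1.2
  · exact congrArg Subtype.val ((Submodule.mem_torsionBySet_iff _ _).1 m.2 ⟨y, hy⟩)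

lemma isArtinian_of_torsionBySet (l : List R) : ∀ {M : Type*} [AddCommGroup M] [Module R M],
    (∀ x ∈ l, ∀ m : M, ∃ k : ℕ, x ^ k • m = 0) →
    IsArtinian R (Submodule.torsionBySet R M {x | x ∈ l}) → IsArtinian R M := by
  induction l with
  | nil =>
    intro M _ _ _ h
    refine isArtinian_of_injective
      (LinearMap.id.codRestrict (Submodule.torsionBySet R M {x | x ∈ []}) fun m ↦ ?_)
      fun a b hab ↦ congrArg Subtype.val hab
    rw [Submodule.mem_torsionBySet_iff]
    exact fun y ↦ absurd y.2 List.not_mem_nil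
  | cons x l ih =>
    intro M _ _ hl h
    refine isArtinian_of_ker_lsmul x (hl x List.mem_cons_self) (ih (fun y hy m ↦ ?_) ?_)
    · obtain ⟨k, hk⟩ := hl y (List.mem_cons_of_mem _ hy) m
      exact ⟨k, Subtype.ext hk⟩
    · obtain ⟨f, hf⟩ := exists_injective_torsionBySet_ker_lsmul (M := M) x l
      exact isArtinian_of_injective f hf

lemma isNoetherian_of_ker_lsmul (x : R) (k : ℕ) : ∀ {M : Type*} [AddCommGroup M] [Module R M],
    (∀ m : M, x ^ k • m = 0) → IsNoetherian R (ker (lsmul R M x)) → IsNoetherian R M := by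
  induction k with
  | zero =>
    intro M _ _ hx _
    have : Subsingleton M := ⟨fun a b ↦ by
      rw [← one_smul R a, ← one_smul R b, ← pow_zero x, hx, hx]⟩
    infer_instance
  | succ k ih =>
    intro M _ _ hx h
    have : IsNoetherian R (range (lsmul R M x)) := by
      refine ih ?_ (isNoetherian_of_injective
        (((range (lsmul R M x)).subtype ∘ₗ Submodule.subtype _).codRestrict
          (ker (lsmul R M x)) fun m ↦ congrArg Subtype.val m.2)
        fun a b hab ↦ Subtype.ext (Subtype.ext (congrArg Subtype.val hab :)))
      rintro ⟨_, m, rfl⟩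
      refine Subtype.ext ?_
      simpa [smul_smul, ← pow_succ] using hx m
    exact isNoetherian_of_range_eq_ker (ker (lsmul R M x)).subtype
      (lsmul R M x).rangeRestrict (by simp)

lemma isNoetherian_of_torsionBySet (l : List R) : ∀ {M : Type*} [AddCommGroup M] [Module R M],
    (∀ x ∈ l, ∃ k : ℕ, ∀ m : M, x ^ k • m = 0) →
    IsNoetherian R (Submodule.torsionBySet R M {x | x ∈ l}) → IsNoetherian R M := by
  induction l with
  | nil =>
    intro M _ _ _ h
    refine isNoetherian_of_injective
      (LinearMap.id.codRestrict (Submodule.torsionBySet R M {x | x ∈ []}) fun m ↦ ?_)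
      fun a b hab ↦ congrArg Subtype.val hab
    rw [Submodule.mem_torsionBySet_iff]
    exact fun y ↦ absurd y.2 List.not_mem_nil
  | cons x l ih =>
    intro M _ _ hl h
    obtain ⟨k, hk⟩ := hl x List.mem_cons_self
    refine isNoetherian_of_ker_lsmul x k hk (ih (fun y hy ↦ ?_) ?_)
    · obtain ⟨k, hk⟩ := hl y (List.mem_cons_of_mem _ hy)
      exact ⟨k, fun m ↦ Subtype.ext (hk m)⟩
    · obtain ⟨f, hf⟩ := exists_injective_torsionBySet_ker_lsmul (M := M) x l
      exact isNoetherian_of_injective f hf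

lemma isArtinian_of_support_isMaximal {M : Type*} [AddCommGroup M] [Module R M]
    (h : ∀ p ∈ Module.support R M, p.asIdeal.IsMaximal) [IsNoetherian R M] [IsNoetherianRing R] :
    IsArtinian R M := by
  let I := Module.annihilator R M
  have : Ring.KrullDimLE 0 (R ⧸ I) := by
    rw [Ring.krullDimLE_zero_iff]
    intro q hq
    have hsupp : (⟨q.comap (Ideal.Quotient.mk I), inferInstance⟩ : PrimeSpectrum R) ∈
        Module.support R M := by
      rw [Module.support_eq_zeroLocus]
      intro r hr
      change Ideal.Quotient.mk I r ∈ q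
      rw [Ideal.Quotient.eq_zero_iff_mem.2 hr]
      exact zero_mem q
    have := h _ hsupp
    rw [← Ideal.map_comap_of_surjective _ Ideal.Quotient.mk_surjective q]
    exact (Ideal.map_eq_top_or_isMaximal_of_surjective _ Ideal.Quotient.mk_surjective
      this).resolve_left (by
        rw [Ideal.map_comap_of_surjective _ Ideal.Quotient.mk_surjective]; exact hq.ne_top)
  have hI : Module.IsTorsionBySet R M I := fun m r ↦ Module.mem_annihilator.1 r.2 m
  let := hI.module
  have : Module.Finite (R ⧸ I) M := Module.Finite.of_restrictScalars_finite R (R ⧸ I) M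
  have : IsArtinianRing (R ⧸ I) := IsNoetherianRing.isArtinianRing_of_krullDimLE_zero
  exact isArtinian_of_surjective_algebraMap (R := R ⧸ I) (Ideal.Quotient.mk_surjective (I := I))

end Torsion

section MaximalSupport

open LinearMap

variable {R : Type*} [CommRing R]

lemma isArtinian_of_torsionBySet_of_support [IsNoetherianRing R] {M : Type*} [AddCommGroup M]
    [Module R M] (l : List R) (hl : ∀ x ∈ l, ∀ m : M, ∃ k : ℕ, x ^ k • m = 0)
    (hM : IsNoetherian R (Submodule.torsionBySet R M {x | x ∈ l}))
    (h : ∀ p ∈ Module.support R M, p.asIdeal.IsMaximal) : IsArtinian R M :=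
  isArtinian_of_torsionBySet l hl <| isArtinian_of_support_isMaximal fun p hp ↦
    h p (Module.support_subset_of_injective _ (Submodule.subtype_injective _) hp)

lemma exists_pow_smul_eq_pow_succ_smul {M : Type*} [AddCommGroup M] [Module R M]
    [IsArtinian R M] (x : R) : ∃ k : ℕ, ∀ m : M, ∃ y : M, x ^ k • m = x ^ (k + 1) • y := by
  obtain ⟨k, hk⟩ := IsArtinian.range_smul_pow_stabilizes M x
  refine ⟨k, fun m ↦ ?_⟩
  have : x ^ k • m ∈ range (x ^ (k + 1) • LinearMap.id : M →ₗ[R] M) :=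
    hk (k + 1) k.le_succ ▸ ⟨m, rfl⟩
  obtain ⟨y, hy⟩ := this
  exact ⟨y, hy.symm⟩

variable {M : Type*} [AddCommGroup M] [Module R M]

lemma exists_notMem_forall_smul_eq_zero {p : Ideal R} [p.IsPrime] {l : List R} {m : M}
    (h : ∀ x ∈ l, ∃ t ∉ p, t • x • m = 0) : ∃ t ∉ p, ∀ x ∈ l, x • t • m = 0 := by
  induction l with
  | nil => exact ⟨1, p.one_notMem, by simp⟩
  | cons x l ih =>
    obtain ⟨t, ht, htm⟩ := ih fun y hy ↦ h y (List.mem_cons_of_mem _ hy)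
    obtain ⟨s, hs, hsm⟩ := h x List.mem_cons_self
    refine ⟨s * t, Ideal.IsPrime.mul_notMem ‹_› hs ht, List.forall_mem_cons.2 ⟨?_, fun y hy ↦ ?_⟩⟩
    · rw [smul_smul, show x * (s * t) = t * (s * x) by ring, mul_smul, mul_smul, hsm, smul_zero]
    · rw [smul_smul, show y * (s * t) = s * (y * t) by ring, mul_smul, mul_smul, htm y hy,
        smul_zero]

lemma isNoetherian_torsionBySet_localizedModule [IsNoetherianRing R] {l : List R} (p : Ideal R)
    [p.IsPrime] (hM : IsNoetherian R (Submodule.torsionBySet R M {x | x ∈ l})) :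
    IsNoetherian (Localization.AtPrime p) (Submodule.torsionBySet (Localization.AtPrime p)
      (LocalizedModule p.primeCompl M)
      {x | x ∈ l.map (algebraMap R (Localization.AtPrime p))}) := by
  have : Module.Finite (Localization.AtPrime p) (LocalizedModule p.primeCompl
      (Submodule.torsionBySet R M {x | x ∈ l})) :=
    inferInstanceAs (Module.Finite (Localization p.primeCompl) _)
  let φ := LocalizedModule.map p.primeCompl (Submodule.torsionBySet R M {x | x ∈ l}).subtype
  refine isNoetherian_of_le (t := range φ) fun w hw ↦ ?_
  induction w using LocalizedModule.induction_on with
  | _ m s =>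
  have hw' : ∀ x ∈ l, ∃ t ∉ p, t • x • m = 0 := by
    intro x hx
    have : algebraMap R (Localization.AtPrime p) x • LocalizedModule.mk m s = 0 :=
      (Submodule.mem_torsionBySet_iff _ _).1 hw ⟨_, List.mem_map_of_mem hx⟩
    rw [algebraMap_smul, LocalizedModule.smul'_mk, ← LocalizedModule.zero_mk s,
      LocalizedModule.mk_eq] at this
    obtain ⟨u, hu⟩ := this
    refine ⟨u * s, (u * s).2, ?_⟩
    simpa [Submonoid.smul_def, mul_smul] using hu
  obtain ⟨t, ht, htm⟩ := exists_notMem_forall_smul_eq_zero hw'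
  refine ⟨LocalizedModule.mk ⟨t • m, (Submodule.mem_torsionBySet_iff _ _).2 fun x ↦
    htm x x.2⟩ (⟨t, ht⟩ * s), ?_⟩
  rw [LocalizedModule.map_mk, LocalizedModule.mk_eq]
  exact ⟨1, by simp [Submonoid.smul_def, smul_smul, mul_comm]⟩

lemma eq_maximalIdeal_of_mem_support_localizedModule (p : Ideal R) [p.IsPrime]
    (hp : ∀ q ∈ Module.support R M, q.asIdeal ≤ p → q.asIdeal = p) :
    ∀ q ∈ Module.support (Localization.AtPrime p) (LocalizedModule p.primeCompl M),
      q.asIdeal.IsMaximal := by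
  intro q hq
  obtain ⟨w, hw⟩ := Module.mem_support_iff'.1 hq
  induction w using LocalizedModule.induction_on with
  | _ m s =>
  have hle : q.asIdeal.under R ≤ p := by
    conv_rhs => rw [← IsLocalization.AtPrime.under_maximalIdeal (Localization.AtPrime p) p]
    exact Ideal.comap_mono (IsLocalRing.le_maximalIdeal q.2.ne_top)
  have hsupp : (⟨q.asIdeal.under R, inferInstance⟩ : PrimeSpectrum R) ∈ Module.support R M := by
    refine Module.mem_support_iff'.2 ⟨m, fun r hr hrm ↦ hw _ hr ?_⟩
    rw [algebraMap_smul, LocalizedModule.smul'_mk, hrm, LocalizedModule.zero_mk]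
  have : q.asIdeal = IsLocalRing.maximalIdeal (Localization.AtPrime p) := by
    rw [← IsLocalization.map_under p.primeCompl (Localization.AtPrime p) q.asIdeal,
      show q.asIdeal.under R = p from hp _ hsupp hle, IsLocalization.AtPrime.map_eq_maximalIdeal p]
  rw [this]
  infer_instance

lemma exists_pow_smul_eq_of_mem_support [IsNoetherianRing R] {l : List R}
    (hl : ∀ x ∈ l, ∀ m : M, ∃ k : ℕ, x ^ k • m = 0)
    (hM : IsNoetherian R (Submodule.torsionBySet R M {x | x ∈ l})) (p : Ideal R) [p.IsPrime]
    (hp : ∀ q ∈ Module.support R M, q.asIdeal ≤ p → q.asIdeal = p) (x : R) :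
    ∃ k : ℕ, ∀ m : M, ∃ t ∉ p, ∃ y : M, t • x ^ k • m = x ^ (k + 1) • y := by
  have : IsArtinian (Localization.AtPrime p) (LocalizedModule p.primeCompl M) := by
    refine isArtinian_of_torsionBySet_of_support _ ?_
      (isNoetherian_torsionBySet_localizedModule p hM)
      (eq_maximalIdeal_of_mem_support_localizedModule p hp)
    intro x hx w
    obtain ⟨x, hxl, rfl⟩ := List.mem_map.1 hx
    induction w using LocalizedModule.induction_on with
    | _ m s =>
    obtain ⟨k, hk⟩ := hl x hxl m
    refine ⟨k, ?_⟩
    rw [← map_pow, algebraMap_smul, LocalizedModule.smul'_mk, hk, LocalizedModule.zero_mk]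
  obtain ⟨k, hk⟩ := exists_pow_smul_eq_pow_succ_smul (M := LocalizedModule p.primeCompl M)
    (algebraMap R (Localization.AtPrime p) x)
  refine ⟨k, fun m ↦ ?_⟩
  obtain ⟨w, hw⟩ := hk (LocalizedModule.mk m 1)
  induction w using LocalizedModule.induction_on with
  | _ y s =>
  rw [← map_pow, ← map_pow, algebraMap_smul, algebraMap_smul, LocalizedModule.smul'_mk,
    LocalizedModule.smul'_mk, LocalizedModule.mk_eq] at hw
  obtain ⟨u, hu⟩ := hw
  refine ⟨u * s, (u * s).2, (u : R) • y, ?_⟩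
  rw [smul_comm _ (u : R)]
  simpa [Submonoid.smul_def, mul_smul] using hu

lemma exists_smul_of_mem_support {l : List R}
    (hl : ∀ x ∈ l, ∀ m : M, ∃ k : ℕ, x ^ k • m = 0) {p : Ideal R} [p.IsPrime] {m : M}
    (hm : ∀ r ∉ p, r • m ≠ 0) :
    ∃ r : R, (∀ s ∉ p, s • r • m ≠ 0) ∧ ∀ x ∈ l, x • r • m = 0 := by
  induction l with
  | nil => exact ⟨1, by simpa using hm, by simp⟩
  | cons x l ih =>
    obtain ⟨r, hr, hrl⟩ := ih fun y hy ↦ hl y (List.mem_cons_of_mem _ hy)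
    classical
    have hex : ∃ k : ℕ, ∃ t ∉ p, t • x ^ k • r • m = 0 := by
      obtain ⟨k, hk⟩ := hl x List.mem_cons_self (r • m)
      exact ⟨k, 1, p.one_notMem, by rw [hk, smul_zero]⟩
    obtain ⟨t, ht, htm⟩ := Nat.find_spec hex
    obtain ⟨k, hk⟩ : ∃ k, Nat.find hex = k + 1 := by
      refine Nat.exists_eq_succ_of_ne_zero fun h0 ↦ hr t ht ?_
      rw [h0] at htm
      simpa using htm
    have hmin := Nat.find_min hex (m := k) (by omega)
    push Not at hmin
    refine ⟨t * x ^ k * r, fun s hs ↦ ?_, List.forall_mem_cons.2 ⟨?_, fun y hy ↦ ?_⟩⟩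
    · have := hmin (s * t) (Ideal.IsPrime.mul_notMem ‹_› hs ht)
      simpa [mul_smul] using this
    · rw [hk] at htm
      rw [smul_smul, show x * (t * x ^ k * r) = t * (x ^ (k + 1) * r) by ring, mul_smul, mul_smul,
        htm]
    · rw [smul_smul, show y * (t * x ^ k * r) = t * x ^ k * (y * r) by ring, mul_smul,
        mul_smul y, hrl y hy, smul_zero]

lemma finite_setOf_mem_support_not_isMaximal [IsNoetherianRing R] {l : List R}
    (hl : ∀ x ∈ l, ∀ m : M, ∃ k : ℕ, x ^ k • m = 0)
    (hM : IsNoetherian R (Submodule.torsionBySet R M {x | x ∈ l}))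
    (h : ∀ p ∈ Module.support R M, p.asIdeal.IsMaximal ∨
      ∀ q ∈ Module.support R M, q.asIdeal ≤ p.asIdeal → q.asIdeal = p.asIdeal) :
    {p ∈ Module.support R M | ¬ p.asIdeal.IsMaximal}.Finite := by
  let T := Submodule.torsionBySet R M {x | x ∈ l}
  refine Set.Finite.of_finite_image (f := PrimeSpectrum.asIdeal)
    ((Ideal.finite_minimalPrimes_of_isNoetherianRing R (Module.annihilator R T)).subset ?_)
    fun _ _ _ _ ↦ PrimeSpectrum.ext
  rintro _ ⟨p, ⟨hp, hmax⟩, rfl⟩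
  have hpT : p ∈ Module.support R T := by
    obtain ⟨m, hm⟩ := Module.mem_support_iff'.1 hp
    obtain ⟨r, hr, hrl⟩ := exists_smul_of_mem_support hl hm
    exact Module.mem_support_iff'.2 ⟨⟨r • m, (Submodule.mem_torsionBySet_iff _ _).2 fun x ↦
      hrl x x.2⟩, fun s hs h0 ↦ hr s hs (congrArg Subtype.val h0)⟩
  rw [Module.support_eq_zeroLocus] at hpT
  refine ⟨⟨p.2, hpT⟩, fun q ⟨hq, hqT⟩ hqp ↦ ?_⟩
  refine ((h p hp).resolve_left hmax ⟨q, hq⟩ ?_ hqp).ge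
  refine Module.support_subset_of_injective _ (Submodule.subtype_injective T) ?_
  rwa [Module.support_eq_zeroLocus]

/-- The quotient `M / (xM + (0 :_M x ^ k))`, as an iterated quotient. -/
abbrev QuotSMulTorsion (M : Type*) [AddCommGroup M] [Module R M] (x : R) (k : ℕ) : Type _ :=
  (M ⧸ range (lsmul R M x)) ⧸
    range ((range (lsmul R M x)).mkQ ∘ₗ (ker (lsmul R M (x ^ k))).subtype)

lemma QuotSMulTorsion.smul_mk_eq_zero {x t : R} {k : ℕ} {m y : M}
    (h : t • x ^ k • m = x ^ (k + 1) • y) :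
    t • (Submodule.Quotient.mk (Submodule.Quotient.mk m) : QuotSMulTorsion M x k) = 0 := by
  have hz : t • m - x • y ∈ ker (lsmul R M (x ^ k)) := by
    rw [mem_ker, lsmul_apply, smul_sub, sub_eq_zero, smul_smul (x ^ k) x, ← pow_succ, ← h,
      smul_comm]
  rw [← Submodule.Quotient.mk_smul, Submodule.Quotient.mk_eq_zero]
  refine ⟨⟨_, hz⟩, ?_⟩
  change Submodule.Quotient.mk (t • m - x • y) = t • Submodule.Quotient.mk m
  rw [← Submodule.Quotient.mk_smul, Submodule.Quotient.eq]
  exact ⟨-y, by simp⟩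

lemma QuotSMulTorsion.exists_support_isMaximal [IsNoetherianRing R] {l : List R}
    (hl : ∀ x ∈ l, ∀ m : M, ∃ k : ℕ, x ^ k • m = 0)
    (hM : IsNoetherian R (Submodule.torsionBySet R M {x | x ∈ l}))
    (h : ∀ p ∈ Module.support R M, p.asIdeal.IsMaximal ∨
      ∀ q ∈ Module.support R M, q.asIdeal ≤ p.asIdeal → q.asIdeal = p.asIdeal) (x : R) :
    ∃ k : ℕ, ∀ p ∈ Module.support R (QuotSMulTorsion M x k), p.asIdeal.IsMaximal := by
  have hfin := finite_setOf_mem_support_not_isMaximal hl hM h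
  have hk : ∀ p : PrimeSpectrum R, ∃ k : ℕ, p ∈ Module.support R M → ¬ p.asIdeal.IsMaximal →
      ∀ m : M, ∃ t ∉ p.asIdeal, ∃ y : M, t • x ^ k • m = x ^ (k + 1) • y := by
    intro p
    by_cases hp : p ∈ Module.support R M ∧ ¬ p.asIdeal.IsMaximal
    · obtain ⟨k, hk⟩ := exists_pow_smul_eq_of_mem_support hl hM p.asIdeal
        ((h p hp.1).resolve_left hp.2) x
      exact ⟨k, fun _ _ ↦ hk⟩
    · exact ⟨0, fun h₁ h₂ ↦ absurd ⟨h₁, h₂⟩ hp⟩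
  choose k hk using hk
  refine ⟨hfin.toFinset.sup k, fun p hp ↦ by_contra fun hmax ↦ ?_⟩
  have hpM : p ∈ Module.support R M := Module.support_subset_of_surjective
    (Submodule.mkQ _ ∘ₗ Submodule.mkQ _)
    ((Submodule.mkQ_surjective _).comp (Submodule.mkQ_surjective _)) hp
  have hle : k p ≤ hfin.toFinset.sup k := Finset.le_sup (f := k) (by simp [hpM, hmax])
  obtain ⟨w, hw⟩ := Module.mem_support_iff'.1 hp
  obtain ⟨w, rfl⟩ := Submodule.Quotient.mk_surjective _ w
  obtain ⟨m, rfl⟩ := Submodule.Quotient.mk_surjective _ w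
  obtain ⟨t, ht, y, hy⟩ := hk p hpM hmax m
  refine hw t ht (QuotSMulTorsion.smul_mk_eq_zero (y := y) ?_)
  obtain ⟨d, hd⟩ := Nat.exists_eq_add_of_le' hle
  rw [hd, add_assoc d, pow_add x d, pow_add x d, mul_smul, mul_smul, smul_comm t, hy]

end MaximalSupport

section Cofinite

open LinearMap

variable {R : Type u} [CommRing R] {N : ModuleCat.{u} R}

lemma exact_subtype_rangeRestrict {A B : Type*} [AddCommGroup A] [AddCommGroup B] [Module R A]
    [Module R B] (φ : A →ₗ[R] B) : Function.Exact (ker φ).subtype φ.rangeRestrict := by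
  rw [LinearMap.exact_iff, ker_rangeRestrict, Submodule.range_subtype]

variable {M : Type u} [AddCommGroup M] [Module R M]

lemma NoetherianExt.range_mkQ_comp_subtype {x : R} {k : ℕ}
    (h : ∀ j i, NoetherianExt N i (ker (lsmul R M (x ^ j)))) (i : ℕ) :
    NoetherianExt N i
      (range ((range (lsmul R M x)).mkQ ∘ₗ (ker (lsmul R M (x ^ k))).subtype)) := by
  let φ := (range (lsmul R M x)).mkQ ∘ₗ (ker (lsmul R M (x ^ k))).subtype
  let ψ : ker (lsmul R M (x ^ (k + 1))) →ₗ[R] ker φ :=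
    ((lsmul R M x ∘ₗ Submodule.subtype _).codRestrict (ker (lsmul R M (x ^ k))) fun m ↦
      (smul_smul _ _ (m : M)).trans ((congrArg (· • (m : M)) (pow_succ x k).symm).trans
        m.2)).codRestrict (ker φ) fun m ↦ (Submodule.Quotient.mk_eq_zero _).2 ⟨m, rfl⟩
  have hψ : Function.Surjective ψ := by
    rintro ⟨⟨m, hm⟩, hm'⟩
    obtain ⟨y, rfl⟩ := (Submodule.Quotient.mk_eq_zero _).1 (mem_ker.1 hm')
    refine ⟨⟨y, ?_⟩, rfl⟩
    rw [mem_ker, lsmul_apply] at hm ⊢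
    rwa [pow_succ, mul_smul]
  have hle : ker (lsmul R M (x ^ 1)) ≤ ker (lsmul R M (x ^ (k + 1))) := fun m hm ↦
    smul_eq_zero_of_le (Nat.le_add_left 1 k) hm
  have hexact : Function.Exact (Submodule.inclusion hle) ψ := by
    intro m
    have : ψ m = 0 ↔ x • (m : M) = 0 :=
      ⟨fun h ↦ congrArg (fun z ↦ ((z : ker (lsmul R M (x ^ k))) : M)) (congrArg Subtype.val h),
        fun h ↦ Subtype.ext (Subtype.ext h)⟩
    rw [this]
    constructor
    · exact fun hm ↦ ⟨⟨m, by rwa [mem_ker, lsmul_apply, pow_one]⟩, rfl⟩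
    · rintro ⟨m, rfl⟩
      exact (congrArg (· • (m : M)) (pow_one x).symm).trans m.2
  exact forall_of_exact₃ (Submodule.subtype_injective _) φ.surjective_rangeRestrict
    (exact_subtype_rangeRestrict φ)
    (forall_of_exact₃ (Submodule.inclusion_injective hle) hψ hexact (h 1) (h (k + 1))) (h k) i

lemma NoetherianExt.of_quotSMulTorsion {x : R} (hx : x ∈ Module.annihilator R N)
    (h : ∀ j i, NoetherianExt N i (ker (lsmul R M (x ^ j)))) {k : ℕ}
    (hQ : ∀ i, NoetherianExt N i (QuotSMulTorsion M x k)) (i : ℕ) : NoetherianExt N i M := by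
  refine of_lsmul hx (pow_one x ▸ h 1) (fun i ↦ ?_) i
  exact of_exact₂ (Submodule.subtype_injective _) (Submodule.mkQ_surjective _)
    (exact_subtype_mkQ _) (range_mkQ_comp_subtype h i) (hQ i)

lemma NoetherianExt.quotSMulTorsion_zero {x : R} {k : ℕ}
    (h : ∀ j i, NoetherianExt N i (ker (lsmul R M (x ^ j)))) (h₀ : NoetherianExt N 0 M)
    (h₁ : NoetherianExt N 1 M) : NoetherianExt N 0 (QuotSMulTorsion M x k) := by
  have hrange : NoetherianExt N 1 (range (lsmul R M x)) := by
    refine of_exact₃ (Submodule.subtype_injective _) (surjective_rangeRestrict _)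
      (exact_subtype_rangeRestrict _) h₁ ?_
    exact pow_one x ▸ h 1 2
  exact of_exact₃ (Submodule.subtype_injective _) (Submodule.mkQ_surjective _)
    (exact_subtype_mkQ _) (of_exact₃ (Submodule.subtype_injective _)
      (Submodule.mkQ_surjective _) (exact_subtype_mkQ _) h₀ hrange) (range_mkQ_comp_subtype h 1)

/-- An induction principle: the Ext modules of `M` are Noetherian as soon as, for all `x` in the
list `L`, those of `M / (xM + (0 :_M x ^ k))` are for some `k`. -/
lemma NoetherianExt.forall_of_list [IsNoetherianRing R] [Module.Finite R N] {L : List R}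
    (hL : ∀ x ∈ L, x ∈ Module.annihilator R N)
    (P : ∀ (M : Type u) [AddCommGroup M] [Module R M], Prop)
    (hP : ∀ (M : Type u) [AddCommGroup M] [Module R M], P M →
      IsNoetherian R (Submodule.torsionBySet R M {x | x ∈ L}))
    (hker : ∀ (M : Type u) [AddCommGroup M] [Module R M], P M → ∀ r : R, P (ker (lsmul R M r)))
    (hquot : ∀ (M : Type u) [AddCommGroup M] [Module R M], P M → ∀ x ∈ L,
      (∀ j i, NoetherianExt N i (ker (lsmul R M (x ^ j)))) →
      ∃ k, ∀ i, NoetherianExt N i (QuotSMulTorsion M x k)) (hM : P M) (i : ℕ) :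
    NoetherianExt N i M := by
  suffices ∀ l ⊆ L, ∀ (M : Type u) [AddCommGroup M] [Module R M], P M →
      (∀ x ∈ L, x ∈ l ∨ ∃ k : ℕ, ∀ m : M, x ^ k • m = 0) → ∀ i, NoetherianExt N i M from
    this L (List.Subset.refl L) M hM (fun x ↦ Or.inl) i
  intro l
  induction l with
  | nil =>
    intro _ M _ _ hM hl i
    have : IsNoetherian R M := isNoetherian_of_torsionBySet L
      (fun x hx ↦ (hl x hx).resolve_left List.not_mem_nil) (hP M hM)
    exact of_finite i
  | cons x l ih =>
    intro hlL M _ _ hM hl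
    obtain ⟨hx, hlL⟩ := List.cons_subset.1 hlL
    have h : ∀ j i, NoetherianExt N i (ker (lsmul R M (x ^ j))) := by
      refine fun j ↦ ih hlL _ (hker M hM _) fun y hy ↦ ?_
      rcases hl y hy with hy' | ⟨k, hk⟩
      · rcases List.mem_cons.1 hy' with rfl | hy'
        · exact Or.inr ⟨j, fun m ↦ Subtype.ext m.2⟩
        · exact Or.inl hy'
      · exact Or.inr ⟨k, fun m ↦ Subtype.ext (hk m)⟩
    obtain ⟨k, hk⟩ := hquot M hM x hx h
    exact of_quotSMulTorsion (hL x hx) h hk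

lemma isNoetherian_torsionBySet_of_noetherianExt {𝔞 : Ideal R} {L : List R}
    (hL : Ideal.span {x | x ∈ L} = 𝔞) (h : NoetherianExt (ModuleCat.of R (R ⧸ 𝔞)) 0 M) :
    IsNoetherian R (Submodule.torsionBySet R M {x | x ∈ L}) := by
  have : IsNoetherian R ((R ⧸ 𝔞) →ₗ[R] M) :=
    have : IsNoetherian R (Abelian.Ext (ModuleCat.of R (R ⧸ 𝔞)) (ModuleCat.of R M) 0) := h
    isNoetherian_of_linearEquiv ((Abelian.Ext.linearEquiv₀ (R := R)).trans
      (ModuleCat.homLinearEquiv (S := R) (M := ModuleCat.of R (R ⧸ 𝔞)) (N := ModuleCat.of R M)))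
  let φ : ((R ⧸ 𝔞) →ₗ[R] M) →ₗ[R] Submodule.torsionBySet R M {x | x ∈ L} :=
    (applyₗ (1 : R ⧸ 𝔞)).codRestrict _ fun f ↦ by
      rw [Submodule.mem_torsionBySet_iff]
      rintro ⟨x, hx⟩
      have : x • (1 : R ⧸ 𝔞) = 0 := by
        rw [Algebra.smul_def, mul_one, Ideal.Quotient.algebraMap_eq,
          Ideal.Quotient.eq_zero_iff_mem, ← hL]
        exact Ideal.subset_span hx
      change x • f 1 = 0
      rw [← map_smul, this, map_zero]
  refine isNoetherian_of_surjective φ (range_eq_top.2 fun m ↦ ?_)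
  refine ⟨Submodule.liftQ 𝔞 (toSpanSingleton R M m) ?_, Subtype.ext (one_smul R (m : M))⟩
  rw [← hL, Ideal.span, Submodule.span_le]
  exact fun x hx ↦ (Submodule.mem_torsionBySet_iff _ _).1 m.2 ⟨x, hx⟩

variable {𝔞 : Ideal R}

lemma exists_pow_smul_eq_zero_of_support_subset
    (h : Module.support R M ⊆ PrimeSpectrum.zeroLocus (𝔞 : Set R)) {x : R} (hx : x ∈ 𝔞) (m : M) :
    ∃ k : ℕ, x ^ k • m = 0 := by
  suffices x ∈ Ideal.radical (ker (toSpanSingleton R M m)) from this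
  rw [Ideal.radical_eq_sInf, Ideal.mem_sInf]
  rintro p ⟨hp, hprime⟩
  exact h (Module.mem_support_iff'.2 ⟨m, fun r hr hrm ↦ hr (hp hrm)⟩ :
    (⟨p, hprime⟩ : PrimeSpectrum R) ∈ Module.support R M) hx

lemma isMax_of_isMax_support {p : Module.support R M} (hp : IsMax p) :
    p.1.asIdeal.IsMaximal :=
  PrimeSpectrum.isMax_iff.1 fun q hpq ↦ hp (b := ⟨q, Module.mem_support_mono hpq p.2⟩) hpq

variable [IsNoetherianRing R]

lemma exists_list_span_eq (𝔞 : Ideal R) : ∃ L : List R, Ideal.span {x | x ∈ L} = 𝔞 := by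
  obtain ⟨s, hs⟩ := IsNoetherian.noetherian 𝔞
  exact ⟨s.toList, by simpa [Ideal.span] using hs⟩

lemma NoetherianExt.forall_of_support_isMaximal (h𝔞 : ∀ x ∈ 𝔞, ∀ m : M, ∃ k : ℕ, x ^ k • m = 0)
    (h : ∀ p ∈ Module.support R M, p.asIdeal.IsMaximal)
    (h₀ : NoetherianExt (ModuleCat.of R (R ⧸ 𝔞)) 0 M) (i : ℕ) :
    NoetherianExt (ModuleCat.of R (R ⧸ 𝔞)) i M := by
  obtain ⟨L, rfl⟩ := exists_list_span_eq 𝔞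
  have hL : ∀ x ∈ L, x ∈ Ideal.span {x | x ∈ L} := fun x hx ↦ Ideal.subset_span hx
  refine forall_of_list (L := L) (fun x hx ↦ ?_) (fun M _ _ ↦
    (∀ x ∈ L, ∀ m : M, ∃ k : ℕ, x ^ k • m = 0) ∧
    (∀ p ∈ Module.support R M, p.asIdeal.IsMaximal) ∧ NoetherianExt _ 0 M)
    (fun M _ _ hM ↦ isNoetherian_torsionBySet_of_noetherianExt rfl hM.2.2)
    (fun M _ _ hM r ↦ ⟨fun x hx m ↦ ?_, fun p hp ↦ hM.2.1 p ?_, ?_⟩)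
    (fun M _ _ hM x hx _ ↦ ?_) ⟨fun x hx ↦ h𝔞 x (hL x hx), h, h₀⟩ i
  · exact Ideal.annihilator_quotient.ge (hL x hx)
  · exact (hM.1 x hx m).imp fun k hk ↦ Subtype.ext hk
  · exact Module.support_subset_of_injective _ (Submodule.subtype_injective _) hp
  · exact of_injective (Submodule.subtype_injective _) hM.2.2
  · have : IsArtinian R M := isArtinian_of_torsionBySet_of_support L hM.1
      (isNoetherian_torsionBySet_of_noetherianExt rfl hM.2.2) hM.2.1
    obtain ⟨k, hk⟩ := exists_pow_smul_eq_pow_succ_smul (M := M) x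
    have : Subsingleton (QuotSMulTorsion M x k) := by
      refine subsingleton_of_forall_eq 0 fun w ↦ ?_
      obtain ⟨w, rfl⟩ := Submodule.Quotient.mk_surjective _ w
      obtain ⟨m, rfl⟩ := Submodule.Quotient.mk_surjective _ w
      obtain ⟨y, hy⟩ := hk m
      rw [← one_smul R (Submodule.Quotient.mk _)]
      exact QuotSMulTorsion.smul_mk_eq_zero (t := 1) (by rw [one_smul, hy])
    exact ⟨k, fun i ↦ of_finite i⟩

lemma NoetherianExt.forall_of_support_isMin_or_isMaximal
    (h𝔞 : ∀ x ∈ 𝔞, ∀ m : M, ∃ k : ℕ, x ^ k • m = 0)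
    (h : ∀ p ∈ Module.support R M, p.asIdeal.IsMaximal ∨
      ∀ q ∈ Module.support R M, q.asIdeal ≤ p.asIdeal → q.asIdeal = p.asIdeal)
    (h₀ : NoetherianExt (ModuleCat.of R (R ⧸ 𝔞)) 0 M)
    (h₁ : NoetherianExt (ModuleCat.of R (R ⧸ 𝔞)) 1 M) (i : ℕ) :
    NoetherianExt (ModuleCat.of R (R ⧸ 𝔞)) i M := by
  obtain ⟨L, rfl⟩ := exists_list_span_eq 𝔞
  have hL : ∀ x ∈ L, x ∈ Ideal.span {x | x ∈ L} := fun x hx ↦ Ideal.subset_span hx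
  refine forall_of_list (L := L) (fun x hx ↦ ?_) (fun M _ _ ↦
    (∀ x ∈ Ideal.span {x | x ∈ L}, ∀ m : M, ∃ k : ℕ, x ^ k • m = 0) ∧
    (∀ p ∈ Module.support R M, p.asIdeal.IsMaximal ∨
      ∀ q ∈ Module.support R M, q.asIdeal ≤ p.asIdeal → q.asIdeal = p.asIdeal) ∧
    NoetherianExt (ModuleCat.of R (R ⧸ Ideal.span {x | x ∈ L})) 0 M ∧
    NoetherianExt (ModuleCat.of R (R ⧸ Ideal.span {x | x ∈ L})) 1 M)
    (fun M _ _ hM ↦ isNoetherian_torsionBySet_of_noetherianExt rfl hM.2.2.1)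
    (fun M _ _ hM r ↦ ?_) (fun M _ _ hM x hx hker ↦ ?_) ⟨h𝔞, h, h₀, h₁⟩ i
  · exact Ideal.annihilator_quotient.ge (hL x hx)
  · obtain ⟨h𝔞, h, h₀, h₁⟩ := hM
    have hsub := Module.support_subset_of_injective _
      (Submodule.subtype_injective (ker (lsmul R M r)))
    refine ⟨fun x hx m ↦ (h𝔞 x hx m).imp fun k hk ↦ Subtype.ext hk, fun p hp ↦
      (h p (hsub hp)).imp_right fun hmin q hq ↦ hmin q (hsub hq),
      of_injective (Submodule.subtype_injective _) h₀, ?_⟩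
    exact of_exact₁ (Submodule.subtype_injective _) (surjective_rangeRestrict _)
      (exact_subtype_rangeRestrict _) (of_injective (Submodule.subtype_injective _) h₀) h₁
  · obtain ⟨h𝔞, h, h₀, h₁⟩ := hM
    obtain ⟨k, hk⟩ := QuotSMulTorsion.exists_support_isMaximal (fun x hx ↦ h𝔞 x (hL x hx))
      (isNoetherian_torsionBySet_of_noetherianExt rfl h₀) h x
    refine ⟨k, forall_of_support_isMaximal (fun y hy w ↦ ?_) hk (quotSMulTorsion_zero hker h₀ h₁)⟩
    obtain ⟨w, rfl⟩ := Submodule.Quotient.mk_surjective _ w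
    obtain ⟨m, rfl⟩ := Submodule.Quotient.mk_surjective _ w
    obtain ⟨j, hj⟩ := h𝔞 y hy m
    refine ⟨j, ?_⟩
    rw [← Submodule.Quotient.mk_smul, ← Submodule.Quotient.mk_smul, hj,
      Submodule.Quotient.mk_zero, Submodule.Quotient.mk_zero]

lemma NoetherianExt.forall_of_moduleDim_le {n : ℕ} (hn : n = 0 ∨ n = 1)
    (hdim : moduleDim R M ≤ n)
    (h : Module.support R M ⊆ PrimeSpectrum.zeroLocus (𝔞 : Set R))
    (hM : ∀ i ≤ n, NoetherianExt (ModuleCat.of R (R ⧸ 𝔞)) i M) (i : ℕ) :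
    NoetherianExt (ModuleCat.of R (R ⧸ 𝔞)) i M := by
  have h𝔞 : ∀ x ∈ 𝔞, ∀ m : M, ∃ k : ℕ, x ^ k • m = 0 :=
    fun x hx ↦ exists_pow_smul_eq_zero_of_support_subset h hx
  rcases hn with rfl | rfl
  · refine forall_of_support_isMaximal h𝔞 (fun p hp ↦ ?_) (hM 0 le_rfl) i
    exact isMax_of_isMax_support (Order.krullDim_nonpos_iff_forall_isMax.1 hdim ⟨p, hp⟩)
  · refine forall_of_support_isMin_or_isMaximal h𝔞 (fun p hp ↦ ?_) (hM 0 zero_le_one)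
      (hM 1 le_rfl) i
    refine (Order.krullDim_le_one_iff.1 hdim ⟨p, hp⟩).symm.imp isMax_of_isMax_support
      fun hmin q hq hqp ↦ le_antisymm hqp (hmin (b := ⟨q, hq⟩) hqp)

end Cofinite

/-- Yang–Shen, Lemma 1.6: for `n ∈ {0,1}` and an `R`-module `M` in `FD_{≤n}`, `M` is
`𝔞`-cofinite if and only if `Supp_R M ⊆ V(𝔞)` and `Ext^i_R(R/𝔞, M)` is finitely generated
for all `i ≤ n`. -/
theorem isCofinite_iff_of_memFD
    {R : Type u} [CommRing R] [IsNoetherianRing R] (𝔞 : Ideal R) (n : ℕ) (hn : n = 0 ∨ n = 1)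
    (M : ModuleCat.{u} R) (hM : MemFD R n M) :
    IsCofinite 𝔞 M ↔
      (Module.support R M ⊆ PrimeSpectrum.zeroLocus (𝔞 : Set R) ∧
        ∀ i : ℕ, i ≤ n → Module.Finite R (extIdeal 𝔞 i M)) := by
  refine ⟨fun h ↦ ⟨h.1, fun i _ ↦ h.2 i⟩, fun ⟨hsupp, hfin⟩ ↦ ⟨hsupp, ?_⟩⟩
  obtain ⟨N₀, hN₀, hdim⟩ := hM
  have : Module.Finite R N₀ := .of_fg hN₀
  have hM : ∀ i ≤ n, NoetherianExt (ModuleCat.of R (R ⧸ 𝔞)) i M := fun i hi ↦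
    have := finite_abelianExt_of_finite_extObj i (hfin i hi)
    isNoetherian_of_isNoetherianRing_of_finite R _
  have hexact := LinearMap.exact_subtype_mkQ N₀
  have hquot : ∀ i, NoetherianExt (ModuleCat.of R (R ⧸ 𝔞)) i (M ⧸ N₀) :=
    NoetherianExt.forall_of_moduleDim_le hn hdim
      ((Module.support_subset_of_surjective _ (Submodule.mkQ_surjective N₀)).trans hsupp)
      fun i hi ↦ .of_exact₃ (Submodule.subtype_injective _) (Submodule.mkQ_surjective _) hexact
        (hM i hi) (.of_finite _)
  rintro (_ | i)
  · exact hfin 0 n.zero_le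
  · have : IsNoetherian R (Abelian.Ext (ModuleCat.of R (R ⧸ 𝔞)) M (i + 1)) :=
      NoetherianExt.of_exact₂ (Submodule.subtype_injective _) (Submodule.mkQ_surjective _) hexact
        (.of_finite _) (hquot (i + 1))
    exact finite_extObj_succ_of_finite_abelianExt i inferInstance
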